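/- The operator Υ satisfies Υ ∘ (A₂ ⊗ I) = q · (A₂ ⊗ A₁A₀) ∘ Υ in End(ℂ^N ⊗ ℂ^N), where I = id_{ℂ^N}. -/

import Mathlib

open Finset Kronecker

/-- `A₀ e_k = q^{2k} e_k` on `ℂ^N` (basis indexed by `ZMod N`). -/
noncomputable def A0 (N : ℕ) (q : ℂ) : Matrix (ZMod N) (ZMod N) ℂ :=
  Matrix.diagonal fun k => q ^ (2 * k.val)

/-- `A₁ e_k = e_{k+1}`. -/
noncomputable def A1 (N : ℕ) : Matrix (ZMod N) (ZMod N) ℂ :=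
  fun j k => if j = k + 1 then 1 else 0

/-- `A₂ e_k = q^{1−2k} e_{k−1}`. -/
noncomputable def A2 (N : ℕ) (q : ℂ) : Matrix (ZMod N) (ZMod N) ℂ :=
  fun j k => if j = k - 1 then q ^ ((1 : ℤ) - 2 * (k.val : ℤ)) else 0

/-- `Υ := (1/N) Σ_{i,j=0}^{N−1} q^{−2ij−j} A₀^i ⊗ (A₁A₀)^{−j}` on `ℂ^N ⊗ ℂ^N`. -/
noncomputable def Ups (N : ℕ) [NeZero N] (q : ℂ) :
    Matrix (ZMod N × ZMod N) (ZMod N × ZMod N) ℂ :=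
  (N : ℂ)⁻¹ • ∑ i ∈ Finset.range N, ∑ j ∈ Finset.range N,
    (q ^ (-(2 * (i : ℤ) * (j : ℤ) + (j : ℤ)))) • ((A0 N q ^ i) ⊗ₖ ((A1 N * A0 N q)⁻¹ ^ j))

/-!
Summing over `j` first gives `Υ = ∑ᵢ A₀ⁱ ⊗ Pᵢ` with
`Pᵢ = (1/N) ∑ⱼ (q^{-(2i+1)} B⁻¹)ʲ` and `B = A₁A₀`. Since `Bᴺ = 1`, each `Pᵢ` is the spectral
projection of `B` for the eigenvalue `q^{-(2i+1)}`, so `B Pᵢ = q^{-(2i+1)} Pᵢ`. Moving `A₂` to the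
left of `A₀ⁱ` costs the factor `q^{-2i} = q · q^{-(2i+1)}`, which is exactly what inserting `q B` in
front of `Pᵢ` produces.
-/

section SkewCommuting

variable {R A : Type*} [Monoid R] [Monoid A] [MulAction R A] [IsScalarTower R A A]
  [SMulCommClass R A A] {r : R} {a b : A}

theorem pow_mul_eq_smul_mul_pow (h : a * b = r • (b * a)) (n : ℕ) :
    a ^ n * b = r ^ n • (b * a ^ n) := by
  induction n with
  | zero => simp
  | succ n ih =>
    rw [pow_succ a, mul_assoc, h, mul_smul_comm, ← mul_assoc, ih, smul_mul_assoc, smul_smul,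
      ← pow_succ', mul_assoc]

theorem mul_pow_eq_smul_pow_mul_pow (h : a * b = r • (b * a)) (n : ℕ) :
    (b * a) ^ n = r ^ n.choose 2 • (b ^ n * a ^ n) := by
  induction n with
  | zero => simp
  | succ n ih =>
    calc (b * a) ^ (n + 1)
        = r ^ n.choose 2 • (b ^ n * (a ^ n * b) * a) := by
          rw [pow_succ, ih, smul_mul_assoc]
          simp only [mul_assoc]
      _ = r ^ (n + 1).choose 2 • (b ^ (n + 1) * a ^ (n + 1)) := by
          rw [pow_mul_eq_smul_mul_pow h, mul_smul_comm, smul_mul_assoc, smul_smul, ← pow_add,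
            Nat.choose_succ_succ' n 1, Nat.choose_one_right, add_comm]
          simp only [pow_succ, mul_assoc]

end SkewCommuting

section GeomSum

variable {A : Type*} [Semiring A] {w : A} {n : ℕ}

theorem mul_geom_sum_of_pow_eq_one (hw : w ^ n = 1) :
    w * ∑ j ∈ range n, w ^ j = ∑ j ∈ range n, w ^ j := by
  cases n with
  | zero => simp
  | succ n =>
    simp only [mul_sum, ← pow_succ']
    rw [sum_range_succ, sum_range_succ', hw, pow_zero]

theorem mul_geom_sum_eq_smul {R : Type*} [SMul R A] [IsScalarTower R A A] {r : R} {b : A}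
    (hw : w ^ n = 1) (hb : b * w = r • 1) :
    b * ∑ j ∈ range n, w ^ j = r • ∑ j ∈ range n, w ^ j := by
  rw [← mul_geom_sum_of_pow_eq_one hw, ← mul_assoc, hb, smul_one_mul,
    mul_geom_sum_of_pow_eq_one hw]

end GeomSum

theorem matrix_mul_geom_sum_smul_inv {ι R : Type*} [Fintype ι] [DecidableEq ι] [CommRing R]
    {B : Matrix ι ι R} {c : R} {n : ℕ} (hB : B ^ n = 1) (hc : c ^ n = 1) :
    B * ∑ j ∈ range n, (c • B⁻¹) ^ j = c • ∑ j ∈ range n, (c • B⁻¹) ^ j := by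
  obtain rfl | hn := eq_or_ne n 0
  · simp
  have hdet : IsUnit B.det := (Matrix.isUnit_iff_isUnit_det B).mp (IsUnit.of_pow_eq_one hB hn)
  apply mul_geom_sum_eq_smul
  · rw [smul_pow, Matrix.inv_pow', hB, hc, inv_one, one_smul]
  · rw [mul_smul_comm, Matrix.mul_nonsing_inv B hdet]

theorem kronecker_sum {l m n p ι α : Type*} [NonUnitalNonAssocSemiring α] (s : Finset ι)
    (M : Matrix l m α) (f : ι → Matrix n p α) :
    M ⊗ₖ ∑ i ∈ s, f i = ∑ i ∈ s, M ⊗ₖ f i := by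
  ext
  simp [Matrix.sum_apply, mul_sum]

theorem pow_val_add_one {M : Type*} [CommMonoid M] {N : ℕ} [NeZero N] {x : M} (hx : x ^ N = 1)
    (k : ZMod N) : x ^ (k + 1).val = x ^ k.val * x := by
  have h := (AddChar.zmodChar N hx).map_add_eq_mul k (1 : ℕ)
  rwa [AddChar.zmodChar_apply', pow_one, Nat.cast_one] at h

theorem A1_pow_apply (N : ℕ) [NeZero N] (m : ℕ) (j k : ZMod N) :
    (A1 N ^ m) j k = if j = k + m then 1 else 0 := by
  induction m generalizing k with
  | zero => simp [Matrix.one_apply]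
  | succ m ih =>
    simp [pow_succ, Matrix.mul_apply, ih, A1, add_assoc, add_comm (1 : ZMod N)]

theorem A1_pow_eq_one (N : ℕ) [NeZero N] : A1 N ^ N = 1 := by
  ext j k
  simp [A1_pow_apply, Matrix.one_apply]

section RootOfUnity

variable {N : ℕ} [NeZero N] {q : ℂ}

theorem A0_pow_eq_one (hq : q ^ N = 1) : A0 N q ^ N = 1 := by
  have h (k : ZMod N) : (q ^ (2 * k.val)) ^ N = 1 := by rw [pow_right_comm, hq, one_pow]
  simp [A0, Matrix.diagonal_pow, Pi.pow_def, h]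

theorem A0_mul_A1 (hq : q ^ N = 1) : A0 N q * A1 N = q ^ 2 • (A1 N * A0 N q) := by
  ext j k
  by_cases hjk : j = k + 1
  · simp [A0, A1, hjk, pow_mul', pow_val_add_one hq, mul_pow, mul_comm]
  · simp [A0, A1, hjk]

theorem A0_mul_A2 (hq : q ^ N = 1) :
    A0 N q * A2 N q = q ^ (-2 : ℤ) • (A2 N q * A0 N q) := by
  ext j k
  by_cases hjk : j = k - 1
  · obtain rfl : k = j + 1 := by simp [hjk]
    have hq0 : q ≠ 0 := (IsUnit.of_pow_eq_one hq (NeZero.ne N)).ne_zero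
    simp only [A0, A2, Matrix.smul_apply, Matrix.mul_diagonal, Matrix.diagonal_mul, smul_eq_mul,
      pow_mul', pow_val_add_one hq]
    field_simp
  · simp [A0, A2, hjk]

theorem A1_mul_A0_pow_eq_one (hq : q ^ N = 1) : (A1 N * A0 N q) ^ N = 1 := by
  have hscalar : (q ^ 2) ^ N.choose 2 = 1 := by
    rw [← pow_mul, Nat.choose_two_right, Nat.mul_div_cancel' N.even_mul_pred_self.two_dvd, pow_mul,
      hq, one_pow]
  rw [mul_pow_eq_smul_pow_mul_pow (A0_mul_A1 hq), hscalar, A1_pow_eq_one, A0_pow_eq_one hq,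
    one_smul, one_mul]

end RootOfUnity

theorem Ups_eq_sum_kronecker_geom_sum (N : ℕ) [NeZero N] (q : ℂ) :
    Ups N q = (N : ℂ)⁻¹ • ∑ i ∈ range N,
      (A0 N q ^ i) ⊗ₖ ∑ j ∈ range N, (q ^ (-(2 * (i : ℤ) + 1)) • (A1 N * A0 N q)⁻¹) ^ j := by
  have hexp (i j : ℕ) :
      q ^ (-(2 * (i : ℤ) * (j : ℤ) + (j : ℤ))) = (q ^ (-(2 * (i : ℤ) + 1))) ^ j := by
    rw [← zpow_natCast, ← zpow_mul]
    ring_nf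
  simp only [Ups, hexp, kronecker_sum, smul_pow, Matrix.kronecker_smul]

theorem Ups_A2_commutation_general (N : ℕ) [NeZero N] (q : ℂ) (hq : q ^ N = 1) :
    Ups N q * (A2 N q ⊗ₖ (1 : Matrix (ZMod N) (ZMod N) ℂ)) =
      q • ((A2 N q ⊗ₖ (A1 N * A0 N q)) * Ups N q) := by
  have hq0 : q ≠ 0 := (IsUnit.of_pow_eq_one hq (NeZero.ne N)).ne_zero
  have hroot (m : ℤ) : (q ^ m) ^ N = 1 := by
    rw [← zpow_natCast, zpow_comm, zpow_natCast, hq, one_zpow]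
  have hscalar (i : ℕ) : (q ^ (-2 : ℤ)) ^ i = q * q ^ (-(2 * (i : ℤ) + 1)) := by
    rw [← zpow_natCast, ← zpow_mul, ← zpow_one_add₀ hq0]
    ring_nf
  rw [Ups_eq_sum_kronecker_geom_sum, smul_mul_assoc, mul_smul_comm, smul_comm q]
  congr 1
  rw [sum_mul, mul_sum, smul_sum]
  refine sum_congr rfl fun i _ => ?_
  rw [← Matrix.mul_kronecker_mul, ← Matrix.mul_kronecker_mul, mul_one,
    pow_mul_eq_smul_mul_pow (A0_mul_A2 hq),
    matrix_mul_geom_sum_smul_inv (A1_mul_A0_pow_eq_one hq) (hroot _),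
    Matrix.smul_kronecker, Matrix.kronecker_smul, smul_smul, hscalar]

/-- `Υ ∘ (A₂ ⊗ I) = q · (A₂ ⊗ A₁A₀) ∘ Υ`. -/
theorem Ups_A2_commutation (N : ℕ) [NeZero N] (hN : 3 ≤ N) (hNodd : Odd N)
    (q : ℂ) (hq : IsPrimitiveRoot q N) :
    Ups N q * (A2 N q ⊗ₖ (1 : Matrix (ZMod N) (ZMod N) ℂ)) =
      q • ((A2 N q ⊗ₖ (A1 N * A0 N q)) * Ups N q) :=
  Ups_A2_commutation_general N q hq.pow_eq_one
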